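/- Fix an agent ℓ and a state i ∈ I_ℓ. For any functions V, V' : X → ℝ and any vectors r, r' : {0,…,q−1} → ℝ, the agent update operator F_ℓ defined by F_ℓ(V,r)(i) = min_{u∈U(i)} Σ_{j∈X} p(i,u,j)·(g(i,u,j) + α·(φ_{jℓ}·V(j) + Σ_{m≠ℓ} φ_{jm}·r_m)) satisfies |F_ℓ(V,r)(i) − F_ℓ(V',r')(i)| ≤ α·max{ max_{j∈I_ℓ} |V(j) − V'(j)|, max_{m≠ℓ} |r_m − r'_m| }. -/

import Mathlib

open Finset Filter Topology

theorem inf_le_aux {A : Type*} (s : Finset A) (hs : s.Nonempty) (f g : A → ℝ) (d : ℝ)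
    (h : ∀ u ∈ s, |f u - g u| ≤ d) : |s.inf' hs f - s.inf' hs g| ≤ d := by
  obtain ⟨a, ha, hfa⟩ := Finset.exists_mem_eq_inf' hs f
  obtain ⟨b, hb, hgb⟩ := Finset.exists_mem_eq_inf' hs g
  have h1 := Finset.inf'_le f hb
  have h2 := Finset.inf'_le g ha
  have h3 := abs_le.1 (h a ha)
  have h4 := abs_le.1 (h b hb)
  rw [abs_le]
  constructor <;> linarith [h3.1, h3.2, h4.1, h4.2]

theorem stmt2
    {n q : ℕ} (hn : 0 < n) (hq : 0 < q)
    {A : Type*}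
    (α : ℝ) (hα0 : 0 ≤ α) (hα1 : α < 1)
    (I : Fin q → Finset (Fin n))
    (hIne : ∀ ℓ, (I ℓ).Nonempty)
    (hIdisj : ∀ ℓ m, ℓ ≠ m → Disjoint (I ℓ) (I m))
    (hIcover : ∀ i : Fin n, ∃ ℓ, i ∈ I ℓ)
    (U : Fin n → Finset A) (hU : ∀ i, (U i).Nonempty)
    (p : Fin n → A → Fin n → ℝ) (g : Fin n → A → Fin n → ℝ)
    (hp0 : ∀ i, ∀ u ∈ U i, ∀ j, 0 ≤ p i u j)
    (hp1 : ∀ i, ∀ u ∈ U i, ∑ j, p i u j = 1)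
    (ℓ : Fin q) (i : Fin n) (hi : i ∈ I ℓ)
    (V V' : Fin n → ℝ) (rv rv' : Fin q → ℝ) :
    ∀ c : ℝ,
      (∀ j ∈ I ℓ, |V j - V' j| ≤ c) →
      (∀ m : Fin q, m ≠ ℓ → |rv m - rv' m| ≤ c) →
      |(U i).inf' (hU i) (fun u => ∑ j, p i u j *
          (g i u j + α * ((if j ∈ I ℓ then (1 : ℝ) else 0) * V j +
            ∑ m ∈ Finset.univ.erase ℓ, (if j ∈ I m then (1 : ℝ) else 0) * rv m))) -
        (U i).inf' (hU i) (fun u => ∑ j, p i u j *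
          (g i u j + α * ((if j ∈ I ℓ then (1 : ℝ) else 0) * V' j +
            ∑ m ∈ Finset.univ.erase ℓ, (if j ∈ I m then (1 : ℝ) else 0) * rv' m)))| ≤
        α * c := by
  intro c hV hr
  have key : ∀ j : Fin n,
      |((if j ∈ I ℓ then (1 : ℝ) else 0) * V j +
          ∑ m ∈ Finset.univ.erase ℓ, (if j ∈ I m then (1 : ℝ) else 0) * rv m) -
        ((if j ∈ I ℓ then (1 : ℝ) else 0) * V' j +
          ∑ m ∈ Finset.univ.erase ℓ, (if j ∈ I m then (1 : ℝ) else 0) * rv' m)| ≤ c := by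
    intro j
    obtain ⟨k, hk⟩ := hIcover j
    have hnot : ∀ m, m ≠ k → j ∉ I m := fun m hm hj =>
      (Finset.disjoint_left.1 (hIdisj m k hm)) hj hk
    by_cases hkl : k = ℓ
    · subst hkl
      have hz : ∀ r : Fin q → ℝ,
          ∑ m ∈ Finset.univ.erase k, (if j ∈ I m then (1 : ℝ) else 0) * r m = 0 := by
        intro r
        apply Finset.sum_eq_zero
        intro m hm
        rw [if_neg (hnot m (Finset.ne_of_mem_erase hm)), zero_mul]
      rw [hz, hz, if_pos hk]
      simpa using hV j hk
    · have hz : ∀ r : Fin q → ℝ,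
          ∑ m ∈ Finset.univ.erase ℓ, (if j ∈ I m then (1 : ℝ) else 0) * r m = r k := by
        intro r
        rw [Finset.sum_eq_single_of_mem k (Finset.mem_erase.2 ⟨hkl, Finset.mem_univ k⟩)]
        · rw [if_pos hk, one_mul]
        · intro m _ hm
          rw [if_neg (hnot m hm), zero_mul]
      rw [hz, hz, if_neg (hnot ℓ (Ne.symm hkl))]
      simpa using hr k hkl
  apply inf_le_aux
  intro u hu
  rw [← Finset.sum_sub_distrib]
  calc _ ≤ _ := Finset.abs_sum_le_sum_abs _ _
    _ ≤ ∑ j, p i u j * (α * c) := by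
      apply Finset.sum_le_sum
      intro j _
      rw [← mul_sub, add_sub_add_left_eq_sub, ← mul_sub, abs_mul, abs_mul,
        abs_of_nonneg (hp0 i u hu j), abs_of_nonneg hα0]
      exact mul_le_mul_of_nonneg_left (mul_le_mul_of_nonneg_left (key j) hα0) (hp0 i u hu j)
    _ = α * c := by rw [← Finset.sum_mul, hp1 i u hu, one_mul]
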